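/- arXiv:2508.06313 — 2 statements merged into one kernel-verified Lean document; each statement's English description precedes it below -/
import Mathlib

section
/- Let n ≥ 1, let 𝓛 be a fixed real symmetric positive definite n×n matrix, and let 𝓛̂ : ℝ → (n×n real matrices) be a differentiable matrix-valued function such that 𝓛̂(t) is symmetric positive definite for every t. Then the function t ↦ D_F(𝓛 ‖ 𝓛̂(t)) = log(det 𝓛̂(t) / det 𝓛) + tr(𝓛̂(t)⁻¹ 𝓛) − n is differentiable with derivative d/dt D_F(𝓛 ‖ 𝓛̂(t)) = tr( 𝓛̂(t)⁻¹ · 𝓛̂'(t) · 𝓛̂(t)⁻¹ · (𝓛̂(t) − 𝓛) ). -/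
theorem aux_det {n : ℕ} (M : ℝ → Matrix (Fin n) (Fin n) ℝ) (M' : Matrix (Fin n) (Fin n) ℝ) (t : ℝ)
    (h : ∀ i j, HasDerivAt (fun s => M s i j) (M' i j) t) :
    HasDerivAt (fun s => (M s).det) (((M t).adjugate * M').trace) t := by
  have h1 : HasDerivAt (fun s => ∑ σ : Equiv.Perm (Fin n),
      ((Equiv.Perm.sign σ : ℤ) : ℝ) * ∏ i, M s (σ i) i)
      (∑ σ : Equiv.Perm (Fin n), ((Equiv.Perm.sign σ : ℤ) : ℝ) *
        ∑ i, (∏ j ∈ Finset.univ.erase i, M t (σ j) j) • M' (σ i) i) t := by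
    refine HasDerivAt.fun_sum fun σ _ => HasDerivAt.const_mul _ ?_
    exact HasDerivAt.fun_finsetProd fun i _ => h (σ i) i
  have h2 : (fun s => (M s).det) = (fun s => ∑ σ : Equiv.Perm (Fin n),
      ((Equiv.Perm.sign σ : ℤ) : ℝ) * ∏ i, M s (σ i) i) := by
    funext s
    exact Matrix.det_apply' _
  rw [h2]
  convert h1 using 1
  have h3 : ∀ i, ((M t).adjugate * M') i i = ((M t).updateCol i (fun k => M' k i)).det := by
    intro i
    rw [← Matrix.cramer_apply, Matrix.cramer_eq_adjugate_mulVec]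
    rfl
  simp only [Matrix.trace, Matrix.diag_apply, h3, Matrix.det_apply', Finset.mul_sum]
  rw [Finset.sum_comm]
  refine Finset.sum_congr rfl fun σ _ => Finset.sum_congr rfl fun i _ => ?_
  congr 1
  rw [← Finset.prod_erase_mul _ _ (Finset.mem_univ i), smul_eq_mul]
  congr 1
  · refine Finset.prod_congr rfl fun j hj => ?_
    rw [Matrix.updateCol_ne (Finset.ne_of_mem_erase hj)]
  · simp

theorem aux_inv {n : ℕ} (M : ℝ → Matrix (Fin n) (Fin n) ℝ) (M' : Matrix (Fin n) (Fin n) ℝ) (t : ℝ)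
    (h : ∀ i j, HasDerivAt (fun s => M s i j) (M' i j) t) (hd : ∀ s, (M s).det ≠ 0) :
    ∀ i j, HasDerivAt (fun s => (M s)⁻¹ i j) ((-((M t)⁻¹ * M' * (M t)⁻¹)) i j) t := by
  have hdiff : ∀ i j, DifferentiableAt ℝ (fun s => (M s)⁻¹ i j) t := by
    intro i j
    have e : (fun s => (M s)⁻¹ i j) =
        fun s => (M s).det⁻¹ * ((M s).updateRow j (Pi.single i 1)).det := by
      funext s
      rw [Matrix.inv_def, Matrix.smul_apply, Matrix.adjugate_apply, Ring.inverse_eq_inv',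
        smul_eq_mul]
    rw [e]
    refine ((aux_det M M' t h).differentiableAt.inv (hd t)).mul ?_
    refine (aux_det (fun s => (M s).updateRow j (Pi.single i 1)) (M'.updateRow j 0) t
      fun a b => ?_).differentiableAt
    by_cases hab : a = j
    · subst hab
      simpa using hasDerivAt_const t _
    · simpa [Matrix.updateRow_ne hab] using h a b
  let N' : Matrix (Fin n) (Fin n) ℝ := fun i j => deriv (fun s => (M s)⁻¹ i j) t
  have hN : ∀ i j, HasDerivAt (fun s => (M s)⁻¹ i j) (N' i j) t := fun i j =>
    (hdiff i j).hasDerivAt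
  have key : M' * (M t)⁻¹ + M t * N' = 0 := by
    ext i j
    have h1 : HasDerivAt (fun s => ∑ k, M s i k * (M s)⁻¹ k j)
        (∑ k, (M' i k * (M t)⁻¹ k j + M t i k * N' k j)) t :=
      HasDerivAt.fun_sum fun k _ => (h i k).mul (hN k j)
    have h2 : (fun s => ∑ k, M s i k * (M s)⁻¹ k j) =
        fun _ => (1 : Matrix (Fin n) (Fin n) ℝ) i j := by
      funext s
      rw [← Matrix.mul_apply, Matrix.mul_nonsing_inv _ (hd s).isUnit]
    rw [h2] at h1
    have h3 := h1.unique (hasDerivAt_const t _)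
    rw [Finset.sum_add_distrib] at h3
    simpa [Matrix.add_apply, Matrix.mul_apply] using h3
  have hN' : N' = -((M t)⁻¹ * M' * (M t)⁻¹) := by
    have h4 := congrArg (fun X => (M t)⁻¹ * X) key
    simp only [Matrix.mul_add, Matrix.mul_zero] at h4
    rw [← Matrix.mul_assoc _ (M t), Matrix.nonsing_inv_mul _ (hd t).isUnit, Matrix.one_mul,
      ← Matrix.mul_assoc] at h4
    exact eq_neg_of_add_eq_zero_right h4
  rw [← hN']
  exact hN

/-- Let `𝓛` be a fixed real symmetric positive definite `n × n` matrix
(`n ≥ 1`) and let `𝓛̂ : ℝ → Matrix` be differentiable (entrywise, with entrywise derivative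
`𝓛̂'`), with `𝓛̂ t` symmetric positive definite for every `t`.  Then
`t ↦ D_F(𝓛 ‖ 𝓛̂ t) = log(det (𝓛̂ t) / det 𝓛) + tr((𝓛̂ t)⁻¹ 𝓛) − n`
is differentiable with derivative `tr((𝓛̂ t)⁻¹ ⬝ 𝓛̂' t ⬝ (𝓛̂ t)⁻¹ ⬝ (𝓛̂ t − 𝓛))`. -/
theorem bregman_logdet_hasDerivAt
    (n : ℕ) (hn : 1 ≤ n)
    (L : Matrix (Fin n) (Fin n) ℝ) (hL : L.PosDef)
    (Lhat Lhat' : ℝ → Matrix (Fin n) (Fin n) ℝ)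
    (hderiv : ∀ t, ∀ i j, HasDerivAt (fun s => Lhat s i j) (Lhat' t i j) t)
    (hpd : ∀ t, (Lhat t).PosDef) :
    ∀ t, HasDerivAt
      (fun s => Real.log ((Lhat s).det / L.det) + ((Lhat s)⁻¹ * L).trace - (n : ℝ))
      (((Lhat t)⁻¹ * Lhat' t * (Lhat t)⁻¹ * (Lhat t - L)).trace) t := by
  intro t
  have hd : ∀ s, (Lhat s).det ≠ 0 := fun s => (hpd s).det_pos.ne'
  have hu := (hd t).isUnit
  have hLd : L.det ≠ 0 := hL.det_pos.ne'
  have h1 := ((aux_det Lhat (Lhat' t) t (hderiv t)).div_const L.det).log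
    (div_ne_zero (hd t) hLd)
  have hI := aux_inv Lhat (Lhat' t) t (hderiv t) hd
  have h2 : HasDerivAt (fun s => ((Lhat s)⁻¹ * L).trace)
      ((-((Lhat t)⁻¹ * Lhat' t * (Lhat t)⁻¹) * L).trace) t := by
    simp only [Matrix.trace, Matrix.diag_apply, Matrix.mul_apply (N := L)]
    exact HasDerivAt.fun_sum fun i _ => HasDerivAt.fun_sum fun k _ => (hI i k).mul_const _
  refine ((h1.add h2).sub_const (n : ℝ)).congr_deriv ?_
  have e1 : ((Lhat t).adjugate * Lhat' t).trace / L.det / ((Lhat t).det / L.det) =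
      ((Lhat t)⁻¹ * Lhat' t).trace := by
    rw [Matrix.inv_def, Matrix.smul_mul, Matrix.trace_smul, Ring.inverse_eq_inv', smul_eq_mul]
    have := hd t
    field_simp
  rw [e1, Matrix.mul_sub, Matrix.trace_sub, Matrix.mul_assoc _ _ (Lhat t),
    Matrix.nonsing_inv_mul _ hu, Matrix.mul_one, Matrix.neg_mul, Matrix.trace_neg, sub_eq_add_neg]
end

section
/- Let β₁ > 0, β₂ > 0, L_q > 0, L_d > 0, K_f > 0, K_v > 0, K_i > 0, K₁ > 0, K₂ > 0 be constants satisfying the gain conditions β₁ K_f / L_q ≥ β₂ K_i / (2 L_d), K₂ ≥ K₁ β₂ / 2, and K₁ = L_q / (β₁ K_v). Let e_F, e_i, e_v : ℝ → ℝ be differentiable functions satisfying e_F' = (β₁/L_q)(−K_f e_F − K_v e_v) + (β₂ K_i / L_d) e_i and e_i' = −(K_i / L_d) e_i. Then the accompanying function ν(t) = (K₁/2) e_F(t)² + (K₂/2) e_i(t)² satisfies, for all t, ν'(t) ≤ −K₁ ( β₁ K_f / L_q − β₂ K_i / (2 L_d) ) e_F(t)² − (K_i / L_d) ( K₂ − K₁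 β₂ / 2 ) e_i(t)² − e_F(t) e_v(t). -/
/-- Under the gain conditions `β₁ K_f / L_q ≥ β₂ K_i / (2 L_d)`,
`K₂ ≥ K₁ β₂ / 2`, `K₁ = L_q / (β₁ K_v)`, and the closed-loop error dynamics
`e_F' = (β₁/L_q)(−K_f e_F − K_v e_v) + (β₂ K_i/L_d) e_i`, `e_i' = −(K_i/L_d) e_i`,
the accompanying function `ν = (K₁/2) e_F² + (K₂/2) e_i²` satisfies
`ν' ≤ −K₁(β₁ K_f/L_q − β₂ K_i/(2 L_d)) e_F² − (K_i/L_d)(K₂ − K₁ β₂/2) e_i² − e_F e_v`. -/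
theorem actuator_virtual_stability
    (β₁ β₂ L_q L_d K_f K_v K_i K₁ K₂ : ℝ)
    (hβ₁ : 0 < β₁) (hβ₂ : 0 < β₂) (hLq : 0 < L_q) (hLd : 0 < L_d)
    (hKf : 0 < K_f) (hKv : 0 < K_v) (hKi : 0 < K_i) (hK₁ : 0 < K₁) (hK₂ : 0 < K₂)
    (hgain₁ : β₁ * K_f / L_q ≥ β₂ * K_i / (2 * L_d))
    (hgain₂ : K₂ ≥ K₁ * β₂ / 2)
    (hgain₃ : K₁ = L_q / (β₁ * K_v))
    (e_F e_i e_v : ℝ → ℝ)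
    (hF : Differentiable ℝ e_F) (hi : Differentiable ℝ e_i) (hv : Differentiable ℝ e_v)
    (hdF : ∀ t, deriv e_F t =
      (β₁ / L_q) * (-(K_f * e_F t) - K_v * e_v t) + (β₂ * K_i / L_d) * e_i t)
    (hdi : ∀ t, deriv e_i t = -(K_i / L_d) * e_i t) :
    ∀ t, deriv (fun s => K₁ / 2 * e_F s ^ 2 + K₂ / 2 * e_i s ^ 2) t ≤
      -K₁ * (β₁ * K_f / L_q - β₂ * K_i / (2 * L_d)) * e_F t ^ 2 -
        (K_i / L_d) * (K₂ - K₁ * β₂ / 2) * e_i t ^ 2 - e_F t * e_v t := by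
  intro t
  have hd : deriv (fun s => K₁ / 2 * e_F s ^ 2 + K₂ / 2 * e_i s ^ 2) t
      = K₁ * e_F t * deriv e_F t + K₂ * e_i t * deriv e_i t := by
    have h := (((hF t).hasDerivAt.fun_pow 2).const_mul (K₁ / 2)).fun_add
      (((hi t).hasDerivAt.fun_pow 2).const_mul (K₂ / 2))
    rw [h.deriv]
    norm_num
    ring
  rw [hd, hdF, hdi]
  have h1 : K₁ * (β₁ / L_q) * K_v = 1 := by
    rw [hgain₃]
    field_simp
  have h2 : 0 ≤ K₁ * (β₂ * K_i / (2 * L_d)) * (e_F t - e_i t) ^ 2 := by positivity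
  have h3 : β₂ * K_i / L_d = 2 * (β₂ * K_i / (2 * L_d)) := by
    field_simp
  have h4 : (K_i / L_d) * (K₂ - K₁ * β₂ / 2)
      = K₂ * (K_i / L_d) - K₁ * (β₂ * K_i / (2 * L_d)) := by
    field_simp
  have h5 : β₁ * K_f / L_q = β₁ / L_q * K_f := by ring
  rw [h3, h4, h5]
  have h6 : K₁ * (β₁ / L_q) * K_v * (e_F t * e_v t) = e_F t * e_v t := by
    rw [h1, one_mul]
  generalize β₂ * K_i / (2 * L_d) = a at *
  generalize K_i / L_d = b at *
  generalize β₁ / L_q = c at *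
  linarith
end
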